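/- arXiv:0809.1612 — 4 statements merged into one kernel-verified Lean document; each statement's English description precedes it below -/
import Mathlib

section
/- Let 0 < α ≤ 2, 0 < H < 1/α, c₀ > 0, and let (c_k)_{k≥0} be real numbers with c_k ∼ c₀ k^{H−1/α−1} as k → ∞ and ∑_{k=0}^∞ c_k = 0. Set c̃_k = c_k for k ≥ 0 and c̃_k = 0 for k < 0. Then for every real r ≠ 0 and every family (r_c) with r_c → r as c → ∞, one has c^{1/α−H} ∑_{k=⌊c r_c⌋+1}^∞ c̃_k → −K₁ r^{H−1/α} if r > 0, and c^{1/α−H} ∑_{k=⌊c r_c⌋+1}^∞ c̃_k → 0 if r < 0, where K₁ = c₀α/(Hα−1). -/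
/-!
Put `β = 1/α - H > 0`, so that `c k ∼ c₀ k^(-β-1)` and `-K₁ = c₀/β`.  The differences
`d k = k^(-β) - (k+1)^(-β)` satisfy `d k ∼ β k^(-β-1)` (`tendsto_powDiff_div`, the derivative of
`(1+x)^(-β)` at `0`), hence `c k / d k → c₀/β`.  The tails of `d` telescope to `n^(-β)`
(`hasSum_powDiff`), so comparing `c` with `(c₀/β) d` termwise gives
`n^β ∑_{k ≥ n} c k → c₀/β` (`tendsto_tail`).  For `r > 0` this is applied along
`n = ⌊c r_c⌋ + 1`, for which `n / c → r`.  For `r < 0` the lower summation bound is eventually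
nonpositive, so the tail is the full sum `∑ c k = 0`.
-/

open Filter Topology Real

/-- The decrement `k^(-β) - (k+1)^(-β)`, whose tails telescope. -/
noncomputable def powDiff (β : ℝ) (k : ℕ) : ℝ := (k : ℝ) ^ (-β) - ((k : ℝ) + 1) ^ (-β)

lemma powDiff_pos {β : ℝ} (hβ : 0 < β) {k : ℕ} (hk : 0 < k) : 0 < powDiff β k := by
  have hk' : (0 : ℝ) < k := by exact_mod_cast hk
  have := Real.rpow_lt_rpow_of_neg hk' (lt_add_one (k : ℝ)) (neg_lt_zero.mpr hβ)
  unfold powDiff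
  linarith

lemma tendsto_powDiff_div (β : ℝ) :
    Tendsto (fun k : ℕ => powDiff β k / (k : ℝ) ^ (-β - 1)) atTop (𝓝 β) := by
  have hd : HasDerivAt (fun x : ℝ => x ^ (-β)) (-β) 1 := by
    simpa using Real.hasDerivAt_rpow_const (x := 1) (p := -β) (Or.inl one_ne_zero)
  have hs := hd.tendsto_slope_zero
  have hinv : Tendsto (fun k : ℕ => ((k : ℝ))⁻¹) atTop (𝓝[≠] 0) := by
    refine tendsto_nhdsWithin_iff.mpr
      ⟨tendsto_inv_atTop_zero.comp tendsto_natCast_atTop_atTop, ?_⟩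
    filter_upwards [eventually_gt_atTop 0] with k hk
    have : (k : ℝ) ≠ 0 := by exact_mod_cast hk.ne'
    simpa using this
  have h := (hs.comp hinv).neg
  rw [neg_neg] at h
  refine h.congr' ?_
  filter_upwards [eventually_gt_atTop 0] with k hk
  have hk' : (0 : ℝ) < k := by exact_mod_cast hk
  have e1 : ((k : ℝ) + 1) ^ (-β) = (k : ℝ) ^ (-β) * (1 + (k : ℝ)⁻¹) ^ (-β) := by
    rw [← Real.mul_rpow hk'.le (by positivity)]
    congr 1
    field_simp
  have hp : (0 : ℝ) < (k : ℝ) ^ (-β) := Real.rpow_pos_of_pos hk' _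
  simp only [Function.comp, powDiff, smul_eq_mul, inv_inv, Real.one_rpow]
  rw [e1, Real.rpow_sub_one hk'.ne']
  field_simp
  ring

lemma hasSum_powDiff {β : ℝ} (hβ : 0 < β) {n : ℕ} (hn : 0 < n) :
    HasSum (fun k : ℕ => powDiff β (n + k)) ((n : ℝ) ^ (-β)) := by
  rw [hasSum_iff_tendsto_nat_of_nonneg (fun k => (powDiff_pos hβ (by omega)).le)]
  have hs : ∀ N : ℕ, ∑ k ∈ Finset.range N, powDiff β (n + k)
      = (n : ℝ) ^ (-β) - ((n + N : ℕ) : ℝ) ^ (-β) := by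
    intro N
    have := Finset.sum_range_sub' (fun k : ℕ => ((n + k : ℕ) : ℝ) ^ (-β)) N
    rw [add_zero] at this
    rw [← this]
    refine Finset.sum_congr rfl fun k _ => ?_
    simp only [powDiff]
    push_cast
    rw [add_assoc]
  simp_rw [hs]
  have ht : Tendsto (fun N : ℕ => ((n + N : ℕ) : ℝ) ^ (-β)) atTop (𝓝 0) := by
    refine (tendsto_rpow_neg_atTop hβ).comp (tendsto_natCast_atTop_atTop.comp ?_)
    exact tendsto_atTop_mono (fun N => Nat.le_add_left N n) tendsto_id
  simpa using ht.const_sub ((n : ℝ) ^ (-β))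

/-- Asymptotics of the tails of a sequence comparable to `powDiff β`. -/
lemma tendsto_tail {β L : ℝ} (hβ : 0 < β) {c : ℕ → ℝ}
    (h : Tendsto (fun k : ℕ => c k / powDiff β k) atTop (𝓝 L)) :
    Tendsto (fun n : ℕ => (n : ℝ) ^ β * ∑' k : ℕ, c (n + k)) atTop (𝓝 L) := by
  rw [Metric.tendsto_atTop] at h ⊢
  intro ε hε
  obtain ⟨N, hN⟩ := h (ε / 2) (half_pos hε)
  refine ⟨max N 1, fun n hn => ?_⟩
  have hnN : N ≤ n := le_trans (le_max_left _ _) hn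
  have hn0 : 0 < n := lt_of_lt_of_le Nat.one_pos (le_trans (le_max_right _ _) hn)
  have hn' : (0 : ℝ) < n := by exact_mod_cast hn0
  have hd := hasSum_powDiff hβ hn0
  have hbd : ∀ k : ℕ, ‖c (n + k) - L * powDiff β (n + k)‖ ≤ ε / 2 * powDiff β (n + k) := by
    intro k
    have hpos := powDiff_pos hβ (show 0 < n + k by omega)
    have h1 := (hN (n + k) (by omega)).le
    have h2 : c (n + k) - L * powDiff β (n + k)
        = (c (n + k) / powDiff β (n + k) - L) * powDiff β (n + k) := by
      field_simp
    rw [Real.dist_eq] at h1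
    rw [h2, norm_mul, Real.norm_eq_abs, Real.norm_eq_abs, abs_of_pos hpos]
    exact mul_le_mul_of_nonneg_right h1 hpos.le
  have hdε := hd.mul_left (ε / 2)
  have hes : Summable (fun k : ℕ => c (n + k) - L * powDiff β (n + k)) :=
    Summable.of_norm_bounded hdε.summable hbd
  have hle := tsum_of_norm_bounded hdε hbd
  have hT : ∑' k : ℕ, c (n + k)
      = (∑' k : ℕ, (c (n + k) - L * powDiff β (n + k))) + L * (n : ℝ) ^ (-β) := by
    rw [← (hes.hasSum.add (hd.mul_left L)).tsum_eq]
    simp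
  have hp : (0 : ℝ) < (n : ℝ) ^ β := Real.rpow_pos_of_pos hn' _
  rw [Real.rpow_neg hn'.le] at hT hle
  rw [Real.dist_eq, hT]
  set E := ∑' k : ℕ, (c (n + k) - L * powDiff β (n + k))
  have e : (n : ℝ) ^ β * (E + L * ((n : ℝ) ^ β)⁻¹) - L = (n : ℝ) ^ β * E := by
    field_simp
    ring
  rw [e, abs_mul, abs_of_pos hp]
  rw [Real.norm_eq_abs] at hle
  calc (n : ℝ) ^ β * |E| ≤ (n : ℝ) ^ β * (ε / 2 * ((n : ℝ) ^ β)⁻¹) :=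
        mul_le_mul_of_nonneg_left hle hp.le
    _ = ε / 2 := by field_simp
    _ < ε := half_lt_self hε

/-- Condition (A1)′, first part: convergence of the rescaled tail sums
`c^(1/α−H) ∑_{k=⌊c r_c⌋+1}^∞ c̃_k` as `c → ∞`, where `c̃_k = c_k` for `k ≥ 0`
and `c̃_k = 0` for `k < 0`, `c_k ∼ c₀ k^(H−1/α−1)` and `∑_k c_k = 0`. -/
theorem rescaled_tail_limit (α H c₀ : ℝ) (c : ℕ → ℝ) (ct : ℤ → ℝ)
    (hα0 : 0 < α) (hα2 : α ≤ 2) (hH0 : 0 < H) (hH : H < 1 / α) (hc₀ : 0 < c₀)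
    (hsim : Tendsto (fun k : ℕ => c k / (c₀ * (k : ℝ) ^ (H - 1 / α - 1))) atTop (𝓝 1))
    (hsum0 : ∑' k : ℕ, c k = 0)
    (hct : ∀ k : ℤ, ct k = if 0 ≤ k then c k.toNat else 0)
    (r : ℝ) (hr : r ≠ 0) (r_ : ℝ → ℝ) (hr_ : Tendsto r_ atTop (𝓝 r)) :
    (0 < r → Tendsto
        (fun cc : ℝ => cc ^ (1 / α - H) * ∑' k : ℕ, ct (⌊cc * r_ cc⌋ + 1 + (k : ℤ)))
        atTop (𝓝 (-(c₀ * α / (H * α - 1)) * r ^ (H - 1 / α)))) ∧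
    (r < 0 → Tendsto
        (fun cc : ℝ => cc ^ (1 / α - H) * ∑' k : ℕ, ct (⌊cc * r_ cc⌋ + 1 + (k : ℤ)))
        atTop (𝓝 0)) := by
  have hβ : 0 < 1 / α - H := by linarith
  obtain ⟨β, hβdef⟩ : ∃ β, β = 1 / α - H := ⟨_, rfl⟩
  have e1 : H - 1 / α = -β := by rw [hβdef]; ring
  rw [e1] at hsim ⊢
  rw [← hβdef] at hβ ⊢
  constructor
  · intro hr0
    have hK : -(c₀ * α / (H * α - 1)) = c₀ / β := by
      have h1 : H * α - 1 = -(β * α) := by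
        rw [hβdef]
        field_simp
        ring
      rw [h1]
      field_simp
    rw [hK]
    have hq : Tendsto (fun k : ℕ => c k / powDiff β k) atTop (𝓝 (c₀ / β)) := by
      have h := (hsim.const_mul c₀).div (tendsto_powDiff_div β) hβ.ne'
      rw [mul_one] at h
      refine h.congr' ?_
      filter_upwards [eventually_gt_atTop 0] with k hk
      have hk' : (0 : ℝ) < k := by exact_mod_cast hk
      have hp : (0 : ℝ) < (k : ℝ) ^ (-β - 1) := Real.rpow_pos_of_pos hk' _
      have hpd := powDiff_pos hβ hk
      simp only [Pi.div_apply]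
      field_simp
    have htail := tendsto_tail hβ hq
    have hmul : Tendsto (fun x : ℝ => x * r_ x) atTop atTop :=
      tendsto_id.atTop_mul_pos hr0 hr_
    have hfl : Tendsto (fun x : ℝ => ⌊x * r_ x⌋₊ + 1) atTop atTop :=
      tendsto_atTop_mono (fun _ => Nat.le_succ _) (tendsto_nat_floor_atTop.comp hmul)
    have hratio : Tendsto (fun x : ℝ => ((⌊x * r_ x⌋₊ + 1 : ℕ) : ℝ) / x) atTop (𝓝 r) := by
      have hup : Tendsto (fun x : ℝ => r_ x + x⁻¹) atTop (𝓝 r) := by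
        simpa using hr_.add tendsto_inv_atTop_zero
      refine tendsto_of_tendsto_of_tendsto_of_le_of_le' hr_ hup ?_ ?_
      · filter_upwards [eventually_gt_atTop 0] with x hx
        rw [le_div_iff₀ hx]
        push_cast
        rw [mul_comm]
        exact (Nat.lt_floor_add_one _).le
      · filter_upwards [eventually_gt_atTop 0, hmul.eventually_ge_atTop 0] with x hx hx2
        rw [div_le_iff₀ hx, add_mul, inv_mul_cancel₀ hx.ne']
        push_cast
        have := Nat.floor_le hx2
        linarith
    have hlim := (hratio.rpow_const (p := -β) (Or.inl hr0.ne')).mul (htail.comp hfl)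
    rw [mul_comm] at hlim
    refine hlim.congr' ?_
    filter_upwards [eventually_gt_atTop 0, hmul.eventually_ge_atTop 0] with x hx hx2
    have hterm : ∀ k : ℕ, ct (⌊x * r_ x⌋ + 1 + (k : ℤ)) = c (⌊x * r_ x⌋₊ + 1 + k) := by
      intro k
      rw [← Int.natCast_floor_eq_floor hx2, hct, if_pos (by positivity)]
      congr 1
    simp_rw [hterm]
    simp only [Function.comp]
    generalize ⌊x * r_ x⌋₊ = m
    have hm : (0 : ℝ) < ((m + 1 : ℕ) : ℝ) := by positivity
    rw [Real.div_rpow hm.le hx.le, Real.rpow_neg hm.le, Real.rpow_neg hx.le]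
    have := Real.rpow_pos_of_pos hm β
    have := Real.rpow_pos_of_pos hx β
    field_simp
  · intro hr0
    refine tendsto_const_nhds.congr' ?_
    filter_upwards [eventually_gt_atTop 0, hr_.eventually_lt_const hr0] with x hx hrx
    have hneg : ⌊x * r_ x⌋ < 0 := Int.floor_lt.mpr (by
      simpa using mul_neg_of_pos_of_neg hx hrx)
    obtain ⟨j, hj⟩ : ∃ j : ℕ, ⌊x * r_ x⌋ + 1 = -(j : ℤ) :=
      ⟨(-(⌊x * r_ x⌋ + 1)).toNat, by omega⟩
    have hinj : Function.Injective (fun k : ℕ => k + j) := add_left_injective j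
    -- The first `j` terms have negative index and vanish; the rest enumerate `c`.
    have hsupp : Function.support (fun k : ℕ => ct (-(j : ℤ) + (k : ℤ)))
        ⊆ Set.range (fun k : ℕ => k + j) := by
      intro k hk
      by_contra hcon
      refine hk ?_
      have hkj : k < j := by
        by_contra hge
        exact hcon ⟨k - j, by simp only; omega⟩
      simp only
      rw [hct, if_neg (by omega)]
    have hts := hinj.tsum_eq hsupp
    have hterm : ∀ k : ℕ, ct (-(j : ℤ) + ((k + j : ℕ) : ℤ)) = c k := by
      intro k
      rw [hct, if_pos (by omega)]
      congr 1
      omega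
    simp_rw [hterm] at hts
    rw [hj, ← hts, hsum0, mul_zero]
end

section
/- Let 0 < α ≤ 2, 0 < H < 1/α, c₀ > 0, and let (c_k)_{k≥0} be real with c_k ∼ c₀ k^{H−1/α−1} as k → ∞ and ∑_{k=0}^∞ c_k = 0; set c̃_k = c_k for k ≥ 0 and c̃_k = 0 for k < 0. For c > 0, x ≥ 0 and r ∈ ℝ define g_c(x, r) = c^{1/α−H} ∑_{k=1−⌊cr⌋}^{⌊cx⌋−⌊cr⌋} c̃_k. Then for every x > 0, every r ∈ ℝ \ {0, x}, and all families x^{(c)} → x and r_c → r as c → ∞, one has g_c(x^{(c)}, r_c) → K₁ [ (x−r)₊^{H−1/α} − (−r)₊^{H−1/α} ], where K₁ = c₀α/(Hα−1). -/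
/-!
Put `β = 1/α − H > 0`, so that `c k ∼ c₀ k^(−β−1)` and `K₁ = −c₀/β`.  The sequence `c` is summable
with sum `0`, hence the partial sum `∑_{k<n} c k` is minus the tail `∑_{k≥n} c k`.  The telescoping
sequence `k^(−β) − (k+1)^(−β) ∼ β k^(−β−1)` has tails exactly `n^(−β)`; comparing tails of the two
sequences gives `n^β ∑_{k<n} c k → −c₀/β` (`tendsto_rpow_mul_partialSum`).

As soon as `⌊c x^{(c)}⌋ ≥ 0`, the sum defining `g_c` is a difference `P(m) − P(m')` of partial sums,
with `P(m) = ∑_{k < m⁺} c k`, `m = ⌊c x^{(c)}⌋ − ⌊c r_c⌋ + 1` and `m' = 1 − ⌊c r_c⌋`.  Here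
`m / c → x − r` and `m' / c → −r`, both nonzero, so each term is handled separately by
`tendsto_rpow_mul_partialSum_toNat`: a positive limit reduces to the asymptotics above, and for a
negative limit the partial sum is eventually empty.
-/

open Filter Topology Real

/-- The increments of `k ↦ −k^(−β)` are asymptotic to `β k^(−β−1)`. -/
lemma tendsto_telescope_div (β : ℝ) :
    Tendsto (fun k : ℕ => ((k : ℝ) ^ (-β) - ((k + 1 : ℕ) : ℝ) ^ (-β)) / (k : ℝ) ^ (-β - 1))
      atTop (𝓝 β) := by
  have h1 : HasDerivAt (fun t : ℝ => t ^ (-β)) (-β) 1 := by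
    simpa using Real.hasDerivAt_rpow_const (x := 1) (p := -β) (Or.inl one_ne_zero)
  have h2 := h1.tendsto_slope_zero
  have h3 : Tendsto (fun k : ℕ => ((k : ℝ))⁻¹) atTop (𝓝[≠] 0) := by
    rw [tendsto_nhdsWithin_iff]
    refine ⟨tendsto_inv_atTop_nhds_zero_nat, ?_⟩
    filter_upwards [eventually_gt_atTop 0] with k hk
    have : (k : ℝ) ≠ 0 := by positivity
    simpa using hk.ne'
  have h4 := (h2.comp h3).neg
  rw [neg_neg] at h4
  refine h4.congr' ?_
  filter_upwards [eventually_gt_atTop 0] with k hk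
  have hk' : (0 : ℝ) < k := by exact_mod_cast hk
  have e1 : ((k + 1 : ℕ) : ℝ) = k * (1 + (k : ℝ)⁻¹) := by
    push_cast; field_simp
  have e2 : (k : ℝ) ^ (-β - 1) = (k : ℝ) ^ (-β) / k := by
    rw [Real.rpow_sub hk', Real.rpow_one]
  have hp : (k : ℝ) ^ (-β) ≠ 0 := (Real.rpow_pos_of_pos hk' _).ne'
  rw [e1, Real.mul_rpow hk'.le (by positivity), e2]
  simp only [Function.comp, smul_eq_mul, inv_inv, Real.one_rpow]
  field_simp
  ring

lemma hasSum_telescope_tail {β : ℝ} (hβ : 0 < β) {n : ℕ} (hn : 0 < n) :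
    HasSum (fun k : ℕ => ((k + n : ℕ) : ℝ) ^ (-β) - ((k + n + 1 : ℕ) : ℝ) ^ (-β))
      ((n : ℝ) ^ (-β)) := by
  have hn' : (0 : ℝ) < n := by exact_mod_cast hn
  rw [hasSum_iff_tendsto_nat_of_nonneg]
  · have : ∀ m : ℕ, ∑ k ∈ Finset.range m,
        (((k + n : ℕ) : ℝ) ^ (-β) - ((k + n + 1 : ℕ) : ℝ) ^ (-β))
        = (n : ℝ) ^ (-β) - ((m + n : ℕ) : ℝ) ^ (-β) := by
      intro m
      have := Finset.sum_range_sub' (fun k : ℕ => ((k + n : ℕ) : ℝ) ^ (-β)) m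
      simp only [zero_add] at this
      rw [← this]
      refine Finset.sum_congr rfl fun k _ => ?_
      rw [show k + n + 1 = k + 1 + n by ring]
    simp_rw [this]
    have ht : Tendsto (fun m : ℕ => ((m + n : ℕ) : ℝ) ^ (-β)) atTop (𝓝 0) :=
      (tendsto_rpow_neg_atTop hβ).comp
        (tendsto_natCast_atTop_atTop.comp (tendsto_add_atTop_nat n))
    simpa using ht.const_sub ((n : ℝ) ^ (-β))
  · intro k
    rw [sub_nonneg]
    apply Real.rpow_le_rpow_of_nonpos
    · positivity
    · push_cast; linarith
    · linarith

/-- If `c k ∼ c₀ k^(−β−1)` and `∑ c k = 0`, then `∑_{k<n} c k ∼ −(c₀/β) n^(−β)`. -/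
lemma tendsto_rpow_mul_partialSum {β c₀ : ℝ} (hβ : 0 < β) (hc₀ : 0 < c₀) {c : ℕ → ℝ}
    (hsim : Tendsto (fun k : ℕ => c k / (c₀ * (k : ℝ) ^ (-β - 1))) atTop (𝓝 1))
    (hsum0 : ∑' k : ℕ, c k = 0) :
    Tendsto (fun n : ℕ => (n : ℝ) ^ β * ∑ k ∈ Finset.range n, c k) atTop (𝓝 (-c₀ / β)) := by
  set a : ℕ → ℝ := fun k => (k : ℝ) ^ (-β) - ((k + 1 : ℕ) : ℝ) ^ (-β) with ha
  have hratio : Tendsto (fun k : ℕ => c k / a k) atTop (𝓝 (c₀ / β)) := by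
    have := (hsim.const_mul c₀).div (tendsto_telescope_div β) hβ.ne'
    rw [mul_one] at this
    refine this.congr' ?_
    filter_upwards [eventually_gt_atTop 0] with k hk
    have hp : (k : ℝ) ^ (-β - 1) ≠ 0 := (Real.rpow_pos_of_pos (by exact_mod_cast hk) _).ne'
    simp only [Pi.div_apply, ha]
    field_simp
  have hapos : ∀ k : ℕ, 0 < k → 0 < a k := by
    intro k hk
    simp only [ha, sub_pos]
    apply Real.rpow_lt_rpow_of_neg
    · exact_mod_cast hk
    · push_cast; linarith
    · linarith
  have htail : ∀ n : ℕ, 0 < n → HasSum (fun k => a (k + n)) ((n : ℝ) ^ (-β)) := fun n hn =>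
    hasSum_telescope_tail hβ hn
  have hbound : ∀ ε > 0, ∀ᶠ k in atTop, |c k - c₀ / β * a k| ≤ ε * a k := by
    intro ε hε
    filter_upwards [hratio (Metric.closedBall_mem_nhds _ hε), eventually_gt_atTop 0] with k hk hk0
    have hak := hapos k hk0
    have hk : |c k / a k - c₀ / β| ≤ ε := hk
    have : c k - c₀ / β * a k = (c k / a k - c₀ / β) * a k := by field_simp
    rw [this, abs_mul, abs_of_pos hak]
    exact mul_le_mul_of_nonneg_right hk hak.le
  have hsa : Summable a := (summable_nat_add_iff 1).1 (htail 1 one_pos).summable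
  have hsd : Summable (fun k => c k - c₀ / β * a k) := by
    refine summable_of_isBigO_nat hsa ?_
    refine Asymptotics.IsBigO.of_bound 1 ?_
    filter_upwards [hbound 1 one_pos, eventually_gt_atTop 0] with k hk hk0
    rwa [Real.norm_eq_abs, Real.norm_eq_abs, abs_of_pos (hapos k hk0)]
  have hsc : Summable c := by
    simpa using hsd.add (hsa.mul_left (c₀ / β))
  rw [Metric.tendsto_nhds]
  intro ε hε
  obtain ⟨N, hN⟩ := eventually_atTop.1 (hbound (ε / 2) (by positivity))
  filter_upwards [eventually_ge_atTop N, eventually_gt_atTop 0] with n hn hn0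
  have hn' : (0 : ℝ) < n := by exact_mod_cast hn0
  have hT := htail n hn0
  have hsplit := hsc.sum_add_tsum_nat_add n
  rw [hsum0] at hsplit
  have hcn : HasSum (fun k => c (k + n)) (-∑ k ∈ Finset.range n, c k) := by
    have := ((summable_nat_add_iff n).2 hsc).hasSum
    rwa [show ∑' k, c (k + n) = -∑ k ∈ Finset.range n, c k by linarith] at this
  have hdn := hcn.sub (hT.mul_left (c₀ / β))
  have hle : |(-∑ k ∈ Finset.range n, c k) - c₀ / β * (n : ℝ) ^ (-β)|
      ≤ ε / 2 * (n : ℝ) ^ (-β) := by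
    have h1 : ∀ k, |c (k + n) - c₀ / β * a (k + n)| ≤ ε / 2 * a (k + n) := fun k =>
      hN (k + n) (by omega)
    have hR := hT.mul_left (ε / 2)
    rw [abs_le]
    constructor
    · exact hasSum_le (fun k => (abs_le.1 (h1 k)).1) hR.neg hdn
    · exact hasSum_le (fun k => (abs_le.1 (h1 k)).2) hdn hR
  have hp : 0 < (n : ℝ) ^ β := Real.rpow_pos_of_pos hn' _
  have hinv : (n : ℝ) ^ β * (n : ℝ) ^ (-β) = 1 := by
    rw [← Real.rpow_add hn']; simp
  rw [Real.dist_eq]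
  have e : (n : ℝ) ^ β * ∑ k ∈ Finset.range n, c k - -c₀ / β
      = -((n : ℝ) ^ β * ((-∑ k ∈ Finset.range n, c k) - c₀ / β * (n : ℝ) ^ (-β))) := by
    linear_combination (-c₀ / β) * hinv
  rw [e, abs_neg, abs_mul, abs_of_pos hp]
  calc _ ≤ (n : ℝ) ^ β * (ε / 2 * (n : ℝ) ^ (-β)) := mul_le_mul_of_nonneg_left hle hp.le
    _ = ε / 2 * ((n : ℝ) ^ β * (n : ℝ) ^ (-β)) := by ring
    _ < ε := by rw [hinv]; linarith

/-- Continuous-parameter form of `tendsto_rpow_mul_partialSum`: integer upper limits `m t` with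
`m t / t → y ≠ 0`, where negative upper limits give an empty sum. -/
lemma tendsto_rpow_mul_partialSum_toNat {β c₀ : ℝ} (hβ : 0 < β) (hc₀ : 0 < c₀) {c : ℕ → ℝ}
    (hsim : Tendsto (fun k : ℕ => c k / (c₀ * (k : ℝ) ^ (-β - 1))) atTop (𝓝 1))
    (hsum0 : ∑' k : ℕ, c k = 0) {m : ℝ → ℤ} {y : ℝ} (hy : y ≠ 0)
    (hm : Tendsto (fun t : ℝ => (m t : ℝ) / t) atTop (𝓝 y)) :
    Tendsto (fun t : ℝ => t ^ β * ∑ k ∈ Finset.range (m t).toNat, c k) atTop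
      (𝓝 (-c₀ / β * (max y 0) ^ (-β))) := by
  rcases lt_or_gt_of_ne hy with hneg | hpos
  · -- The limit is `0` because `0 ^ (-β) = 0` for `β ≠ 0`.
    rw [max_eq_right hneg.le, Real.zero_rpow (by linarith : -β ≠ 0), mul_zero]
    refine tendsto_const_nhds.congr' ?_
    filter_upwards [hm.eventually_lt_const hneg, eventually_gt_atTop 0] with t ht ht0
    have : (m t : ℝ) < 0 := by
      rw [div_lt_iff₀ ht0] at ht; simpa using ht
    have : m t < 0 := by exact_mod_cast this
    rw [Int.toNat_of_nonpos this.le]; simp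
  · rw [max_eq_left hpos.le]
    have hev : ∀ᶠ t in atTop, 0 < t ∧ 0 < (m t : ℝ) := by
      filter_upwards [hm.eventually_const_lt hpos, eventually_gt_atTop 0] with t ht ht0
      exact ⟨ht0, by rw [lt_div_iff₀ ht0] at ht; simpa using ht⟩
    have hcast : ∀ t, 0 < (m t : ℝ) → (((m t).toNat : ℕ) : ℝ) = m t := by
      intro t ht
      have : 0 ≤ m t := by exact_mod_cast ht.le
      exact_mod_cast Int.toNat_of_nonneg this
    have hmtop : Tendsto (fun t => (m t : ℝ)) atTop atTop := by
      refine (hm.pos_mul_atTop hpos tendsto_id).congr' ?_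
      filter_upwards [eventually_gt_atTop 0] with t ht
      simp only [id]; field_simp
    have hNtop : Tendsto (fun t => (m t).toNat) atTop atTop := by
      rw [← tendsto_natCast_atTop_iff (R := ℝ)]
      refine hmtop.congr' ?_
      filter_upwards [hev] with t ht
      exact (hcast t ht.2).symm
    have h1 := (tendsto_rpow_mul_partialSum hβ hc₀ hsim hsum0).comp hNtop
    have h2 := hm.rpow_const (p := -β) (Or.inl hpos.ne')
    refine (h1.mul h2).congr' ?_
    filter_upwards [hev] with t ht
    have hmp : 0 < (m t : ℝ) ^ β := Real.rpow_pos_of_pos ht.2 _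
    have htp : 0 < t ^ β := Real.rpow_pos_of_pos ht.1 _
    simp only [Function.comp, hcast t ht.2]
    rw [Real.div_rpow ht.2.le ht.1.le, Real.rpow_neg ht.2.le, Real.rpow_neg ht.1.le]
    field_simp

/-- Sums of the zero-extended sequence over integer intervals are differences of partial sums. -/
lemma sum_Icc_zeroExtend {c : ℕ → ℝ} {ct : ℤ → ℝ}
    (hct : ∀ k : ℤ, ct k = if 0 ≤ k then c k.toNat else 0) (a : ℤ) (n : ℕ) :
    ∑ k ∈ Finset.Icc a (a + n - 1), ct k =
      ∑ k ∈ Finset.range (a + n).toNat, c k - ∑ k ∈ Finset.range a.toNat, c k := by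
  induction n with
  | zero => simp
  | succ n ih =>
    have : Finset.Icc a (a + (n + 1 : ℕ) - 1) = insert (a + n) (Finset.Icc a (a + n - 1)) := by
      ext k; simp only [Finset.mem_Icc, Finset.mem_insert]; push_cast; omega
    rw [this, Finset.sum_insert (by simp), ih, hct]
    split_ifs with h
    · rw [show (a + (n + 1 : ℕ)).toNat = (a + n).toNat + 1 by push_cast; omega,
        Finset.sum_range_succ]
      ring
    · rw [show (a + (n + 1 : ℕ)).toNat = (a + n).toNat by push_cast; omega]
      ring

lemma tendsto_floor_mul_div {u : ℝ → ℝ} {y : ℝ} (hu : Tendsto u atTop (𝓝 y)) :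
    Tendsto (fun t : ℝ => (⌊t * u t⌋ : ℝ) / t) atTop (𝓝 y) := by
  have h0 : Tendsto (fun t : ℝ => u t - t⁻¹) atTop (𝓝 y) := by
    simpa using hu.sub tendsto_inv_atTop_zero
  refine tendsto_of_tendsto_of_tendsto_of_le_of_le' h0 hu ?_ ?_
  · filter_upwards [eventually_gt_atTop 0] with t ht
    rw [le_div_iff₀ ht, sub_mul, inv_mul_cancel₀ ht.ne', mul_comm]
    exact (Int.sub_one_lt_floor _).le
  · filter_upwards [eventually_gt_atTop 0] with t ht
    rw [div_le_iff₀ ht, mul_comm]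
    exact Int.floor_le _

/-- Condition (A1)′: the rescaled coefficient sums
`g_c(x,r) = c^(1/α−H) ∑_{k=1−⌊cr⌋}^{⌊cx⌋−⌊cr⌋} c̃_k` converge, along any families
`x^{(c)} → x` and `r_c → r` with `x > 0` and `r ∉ {0, x}`, to
`K₁ [(x−r)₊^(H−1/α) − (−r)₊^(H−1/α)]` where `K₁ = c₀α/(Hα−1)`. -/
theorem g_c_limit (α H c₀ : ℝ) (c : ℕ → ℝ) (ct : ℤ → ℝ)
    (hα0 : 0 < α) (hα2 : α ≤ 2) (hH0 : 0 < H) (hH : H < 1 / α) (hc₀ : 0 < c₀)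
    (hsim : Tendsto (fun k : ℕ => c k / (c₀ * (k : ℝ) ^ (H - 1 / α - 1))) atTop (𝓝 1))
    (hsum0 : ∑' k : ℕ, c k = 0)
    (hct : ∀ k : ℤ, ct k = if 0 ≤ k then c k.toNat else 0)
    (x r : ℝ) (hx : 0 < x) (hr0 : r ≠ 0) (hrx : r ≠ x)
    (x_ r_ : ℝ → ℝ) (hx_ : Tendsto x_ atTop (𝓝 x)) (hr_ : Tendsto r_ atTop (𝓝 r)) :
    Tendsto
      (fun cc : ℝ => cc ^ (1 / α - H) *
        ∑ k ∈ Finset.Icc (1 - ⌊cc * r_ cc⌋) (⌊cc * x_ cc⌋ - ⌊cc * r_ cc⌋), ct k)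
      atTop
      (𝓝 ((c₀ * α / (H * α - 1)) *
        ((max (x - r) 0) ^ (H - 1 / α) - (max (-r) 0) ^ (H - 1 / α)))) := by
  have hβ : 0 < 1 / α - H := by linarith
  have e1 : H - 1 / α - 1 = -(1 / α - H) - 1 := by ring
  have e2 : H - 1 / α = -(1 / α - H) := by ring
  have e3 : c₀ * α / (H * α - 1) = -c₀ / (1 / α - H) := by
    have h1 : H * α - 1 ≠ 0 := by
      rw [lt_div_iff₀ hα0] at hH; linarith
    rw [div_eq_div_iff h1 hβ.ne']
    field_simp
    ring
  rw [e1] at hsim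
  rw [e2, e3]
  have hX := tendsto_floor_mul_div hx_
  have hR := tendsto_floor_mul_div hr_
  have hm1 : Tendsto (fun t : ℝ => ((⌊t * x_ t⌋ - ⌊t * r_ t⌋ + 1 : ℤ) : ℝ) / t) atTop
      (𝓝 (x - r)) := by
    have := (hX.sub hR).add tendsto_inv_atTop_zero
    rw [add_zero] at this
    refine this.congr fun t => ?_
    push_cast; ring
  have hm2 : Tendsto (fun t : ℝ => ((1 - ⌊t * r_ t⌋ : ℤ) : ℝ) / t) atTop (𝓝 (-r)) := by
    have := tendsto_inv_atTop_zero.sub hR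
    rw [zero_sub] at this
    refine this.congr fun t => ?_
    push_cast; ring
  have L1 := tendsto_rpow_mul_partialSum_toNat hβ hc₀ hsim hsum0 (sub_ne_zero.2 hrx.symm) hm1
  have L2 := tendsto_rpow_mul_partialSum_toNat hβ hc₀ hsim hsum0 (neg_ne_zero.2 hr0) hm2
  rw [mul_sub]
  refine (L1.sub L2).congr' ?_
  filter_upwards [hx_.eventually_const_lt hx, eventually_gt_atTop 0] with t ht ht0
  obtain ⟨n, hn⟩ := Int.eq_ofNat_of_zero_le (Int.floor_nonneg.2 (mul_pos ht0 ht).le)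
  have := sum_Icc_zeroExtend hct (1 - ⌊t * r_ t⌋) n
  rw [hn, show (n : ℤ) - ⌊t * r_ t⌋ = 1 - ⌊t * r_ t⌋ + n - 1 by ring, this,
    show 1 - ⌊t * r_ t⌋ + (n : ℤ) - 1 + 1 = 1 - ⌊t * r_ t⌋ + n by ring]
  ring
end

section
/- For H ∈ (0,1], the fractional Brownian motion covariance kernel R(s,t) = ½( |s|^{2H} + |t|^{2H} − |s−t|^{2H} ) is positive semidefinite on ℝ: for every n ≥ 1, all t₁,…,t_n ∈ ℝ and all a₁,…,a_n ∈ ℝ, ∑_{i=1}^n ∑_{j=1}^n a_i a_j R(t_i, t_j) ≥ 0. -/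
open Real

/-!
For `H = 1` the kernel is `R(s,t) = s * t`, so the quadratic form is the square `(∑ a i * t i) ^ 2`.
For `0 < H < 1`, the substitution `u ↦ |x| u` gives the representation
`|x| ^ (2H) * C = ∫₀^∞ (1 - cos (x u)) u ^ (-1 - 2H) du`, with `C > 0` the value of the integral at
`x = 1` (`fbm_integral_scale`, `fbm_const_pos`). The identity
`(1 - cos p) + (1 - cos q) - (1 - cos (p - q)) = (1 - cos p) (1 - cos q) + sin p * sin q`
then exhibits `2 * C * R(s,t)` as an integral over `u`, with positive weight, of rank-two positive
semidefinite kernels in `(s,t)`.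
-/

lemma fbm_integrable_one {H : ℝ} (hH0 : 0 < H) (hH1 : H < 1) :
    MeasureTheory.IntegrableOn (fun u : ℝ => (1 - cos u) * u ^ (-1 - 2 * H)) (Set.Ioi 0) := by
  have hmeas : Measurable (fun u : ℝ => (1 - cos u) * u ^ (-1 - 2 * H)) := by fun_prop
  rw [← Set.Ioc_union_Ioi_eq_Ioi (zero_le_one (α := ℝ))]
  refine MeasureTheory.IntegrableOn.union ?_ ?_
  · have h1 : MeasureTheory.IntegrableOn (fun u : ℝ => u ^ (1 - 2 * H)) (Set.Ioc 0 1) :=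
      (intervalIntegrable_iff_integrableOn_Ioc_of_le zero_le_one).1
        (intervalIntegral.intervalIntegrable_rpow' (by linarith))
    refine MeasureTheory.Integrable.mono' h1 hmeas.aestronglyMeasurable ?_
    filter_upwards [MeasureTheory.ae_restrict_mem measurableSet_Ioc] with u hu
    have hu0 : 0 < u := hu.1
    have hp : 0 < u ^ (-1 - 2 * H) := rpow_pos_of_pos hu0 _
    have hc := one_sub_sq_div_two_le_cos (x := u)
    have hc1 := cos_le_one u
    rw [norm_of_nonneg (mul_nonneg (by linarith) hp.le)]
    have he : u ^ (1 - 2 * H) = u ^ 2 * u ^ (-1 - 2 * H) := by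
      rw [← rpow_natCast, ← rpow_add hu0]
      congr 1
      push_cast
      ring
    rw [he]
    exact mul_le_mul_of_nonneg_right (by nlinarith) hp.le
  · have h1 : MeasureTheory.IntegrableOn (fun u : ℝ => 2 * u ^ (-1 - 2 * H)) (Set.Ioi 1) :=
      (integrableOn_Ioi_rpow_of_lt (by linarith) one_pos).const_mul 2
    refine MeasureTheory.Integrable.mono' h1 hmeas.aestronglyMeasurable ?_
    filter_upwards [MeasureTheory.ae_restrict_mem measurableSet_Ioi] with u hu
    have hu0 : 0 < u := one_pos.trans hu
    have hp : 0 < u ^ (-1 - 2 * H) := rpow_pos_of_pos hu0 _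
    have hc := neg_one_le_cos u
    have hc1 := cos_le_one u
    rw [norm_of_nonneg (mul_nonneg (by linarith) hp.le)]
    exact mul_le_mul_of_nonneg_right (by linarith) hp.le

lemma fbm_const_pos {H : ℝ} (hH0 : 0 < H) (hH1 : H < 1) :
    0 < ∫ u in Set.Ioi (0 : ℝ), (1 - cos u) * u ^ (-1 - 2 * H) := by
  rw [MeasureTheory.setIntegral_pos_iff_support_of_nonneg_ae _ (fbm_integrable_one hH0 hH1)]
  · refine lt_of_lt_of_le ?_ (MeasureTheory.measure_mono (s := Set.Ioo (0 : ℝ) 1) ?_)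
    · simp
    · intro u hu
      have hp : 0 < u ^ (-1 - 2 * H) := rpow_pos_of_pos hu.1 _
      have hc : cos u < 1 := by
        have := cos_lt_cos_of_nonneg_of_le_pi le_rfl (by linarith [pi_gt_three, hu.2]) hu.1
        simpa using this
      exact ⟨(mul_pos (by linarith) hp).ne', hu.1⟩
  · filter_upwards [MeasureTheory.ae_restrict_mem measurableSet_Ioi] with u hu
    exact mul_nonneg (by linarith [cos_le_one u]) (rpow_nonneg (le_of_lt hu) _)

lemma fbm_integrand_scale (H : ℝ) {x : ℝ} (hx : x ≠ 0) {u : ℝ} (hu : 0 < u) :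
    (1 - cos (x * u)) * u ^ (-1 - 2 * H) =
      |x| ^ (1 + 2 * H) * ((1 - cos (|x| * u)) * (|x| * u) ^ (-1 - 2 * H)) := by
  have hx0 : 0 < |x| := abs_pos.2 hx
  have hc : cos (|x| * u) = cos (x * u) := by
    rw [← cos_abs (x * u), abs_mul, abs_of_pos hu]
  have h1 : |x| ^ (1 + 2 * H) * |x| ^ (-1 - 2 * H) = 1 := by
    rw [← rpow_add hx0, show 1 + 2 * H + (-1 - 2 * H) = 0 by ring, rpow_zero]
  rw [hc, mul_rpow hx0.le hu.le]
  linear_combination (-(1 - cos (x * u)) * u ^ (-1 - 2 * H)) * h1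

lemma fbm_integrable {H : ℝ} (hH0 : 0 < H) (hH1 : H < 1) (x : ℝ) :
    MeasureTheory.IntegrableOn (fun u : ℝ => (1 - cos (x * u)) * u ^ (-1 - 2 * H))
      (Set.Ioi 0) := by
  rcases eq_or_ne x 0 with rfl | hx
  · simp
  have h := (MeasureTheory.integrableOn_Ioi_comp_mul_left_iff
    (fun u : ℝ => (1 - cos u) * u ^ (-1 - 2 * H)) 0 (abs_pos.2 hx)).2
    (by simpa using fbm_integrable_one hH0 hH1)
  exact MeasureTheory.IntegrableOn.congr_fun (h.const_mul (|x| ^ (1 + 2 * H)))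
    (fun u hu => (fbm_integrand_scale H hx hu).symm) measurableSet_Ioi

lemma fbm_integral_scale {H : ℝ} (hH0 : 0 < H) (x : ℝ) :
    ∫ u in Set.Ioi (0 : ℝ), (1 - cos (x * u)) * u ^ (-1 - 2 * H) =
      |x| ^ (2 * H) * ∫ u in Set.Ioi (0 : ℝ), (1 - cos u) * u ^ (-1 - 2 * H) := by
  rcases eq_or_ne x 0 with rfl | hx
  · simp [zero_rpow (show 2 * H ≠ 0 by positivity)]
  have hx0 : 0 < |x| := abs_pos.2 hx
  rw [MeasureTheory.setIntegral_congr_fun measurableSet_Ioi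
    (fun u hu => fbm_integrand_scale H hx hu), MeasureTheory.integral_const_mul,
    MeasureTheory.integral_comp_mul_left_Ioi
      (fun u : ℝ => (1 - cos u) * u ^ (-1 - 2 * H)) 0 hx0, mul_zero, smul_eq_mul,
    rpow_add hx0, rpow_one]
  field_simp

/-- The integrand of the quadratic form at frequency `u`, without its weight, is a sum of
two squares. -/
lemma fbm_sum_sq {n : ℕ} (t a : Fin n → ℝ) (u : ℝ) :
    ∑ i, ∑ j, a i * a j * ((1 - cos (t i * u)) + (1 - cos (t j * u))
      - (1 - cos ((t i - t j) * u))) =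
    (∑ i, a i * (1 - cos (t i * u))) ^ 2 + (∑ i, a i * sin (t i * u)) ^ 2 := by
  rw [sq, sq, Finset.sum_mul_sum, Finset.sum_mul_sum, ← Finset.sum_add_distrib]
  refine Finset.sum_congr rfl fun i _ => ?_
  rw [← Finset.sum_add_distrib]
  refine Finset.sum_congr rfl fun j _ => ?_
  rw [sub_mul, cos_sub]
  ring

/-- The fractional Brownian motion covariance kernel
`R(s,t) = ½(|s|^{2H} + |t|^{2H} − |s−t|^{2H})` is positive semidefinite on `ℝ`
for every Hurst index `H ∈ (0,1]`. -/
theorem fbm_covariance_posSemidef (H : ℝ) (hH0 : 0 < H) (hH1 : H ≤ 1)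
    (n : ℕ) (hn : 1 ≤ n) (t : Fin n → ℝ) (a : Fin n → ℝ) :
    0 ≤ ∑ i : Fin n, ∑ j : Fin n,
        a i * a j *
          ((|t i| ^ (2 * H) + |t j| ^ (2 * H) - |t i - t j| ^ (2 * H)) / 2) := by
  rcases hH1.eq_or_lt with rfl | hlt
  · have h : ∑ i : Fin n, ∑ j : Fin n, a i * a j *
          ((|t i| ^ (2 * (1 : ℝ)) + |t j| ^ (2 * (1 : ℝ)) - |t i - t j| ^ (2 * (1 : ℝ))) / 2)
        = (∑ i, a i * t i) ^ 2 := by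
      rw [sq, Finset.sum_mul_sum]
      refine Finset.sum_congr rfl fun i _ => Finset.sum_congr rfl fun j _ => ?_
      simp only [mul_one, rpow_two, sq_abs]
      ring
    rw [h]
    positivity
  set C := ∫ u in Set.Ioi (0 : ℝ), (1 - cos u) * u ^ (-1 - 2 * H) with hC
  have hCpos : 0 < C := fbm_const_pos hH0 hlt
  have hI := fbm_integrable hH0 hlt
  let F : Fin n → Fin n → ℝ → ℝ := fun i j u =>
    a i * a j * ((1 - cos (t i * u)) * u ^ (-1 - 2 * H) + (1 - cos (t j * u)) * u ^ (-1 - 2 * H)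
      - (1 - cos ((t i - t j) * u)) * u ^ (-1 - 2 * H))
  have hFint (i j : Fin n) : MeasureTheory.IntegrableOn (F i j) (Set.Ioi 0) :=
    (((hI (t i)).add (hI (t j))).sub (hI (t i - t j))).const_mul _
  have hF (i j : Fin n) : ∫ u in Set.Ioi (0 : ℝ), F i j u = 2 * C * (a i * a j *
      ((|t i| ^ (2 * H) + |t j| ^ (2 * H) - |t i - t j| ^ (2 * H)) / 2)) := by
    have hadd : MeasureTheory.IntegrableOn (fun u : ℝ => (1 - cos (t i * u)) * u ^ (-1 - 2 * H)
        + (1 - cos (t j * u)) * u ^ (-1 - 2 * H)) (Set.Ioi 0) := (hI (t i)).add (hI (t j))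
    simp only [F]
    rw [MeasureTheory.integral_const_mul,
      MeasureTheory.integral_sub hadd (hI (t i - t j)),
      MeasureTheory.integral_add (hI (t i)) (hI (t j)),
      fbm_integral_scale hH0, fbm_integral_scale hH0, fbm_integral_scale hH0, ← hC]
    ring
  refine nonneg_of_mul_nonneg_right (a := 2 * C) ?_ (by positivity)
  have hsum : 2 * C * (∑ i : Fin n, ∑ j : Fin n, a i * a j *
      ((|t i| ^ (2 * H) + |t j| ^ (2 * H) - |t i - t j| ^ (2 * H)) / 2)) =
      ∫ u in Set.Ioi (0 : ℝ), ∑ i, ∑ j, F i j u := by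
    rw [MeasureTheory.integral_finsetSum _
      fun i _ => MeasureTheory.integrable_finsetSum _ fun j _ => hFint i j]
    simp_rw [MeasureTheory.integral_finsetSum _ fun j _ => hFint _ j, hF, Finset.mul_sum]
  rw [hsum]
  refine MeasureTheory.setIntegral_nonneg measurableSet_Ioi fun u hu => ?_
  have hw : 0 ≤ u ^ (-1 - 2 * H) := rpow_nonneg (le_of_lt hu) _
  have hsq : ∑ i, ∑ j, F i j u = ((∑ i, a i * (1 - cos (t i * u))) ^ 2
      + (∑ i, a i * sin (t i * u)) ^ 2) * u ^ (-1 - 2 * H) := by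
    rw [← fbm_sum_sq]
    simp_rw [Finset.sum_mul, F]
    refine Finset.sum_congr rfl fun i _ => Finset.sum_congr rfl fun j _ => ?_
    ring
  rw [hsq]
  positivity
end

section
/- Let 0 < α ≤ 2, 0 < H < 1/α, c₀ > 0, and let (c_k)_{k≥0} be real with c_k ∼ c₀ k^{H−1/α−1} as k → ∞ and ∑_{k=0}^∞ c_k = 0; set c̃_k = c_k for k ≥ 0 and c̃_k = 0 for k < 0. Fix x ≥ 0, T > 0, and an exponent q > 0 with q(H − 1/α) > −1. Then sup_{c ≥ 1} (1/c) ∑_{j = −⌊cT⌋}^{⌊cT⌋} | c^{1/α−H} ∑_{k=⌊cx⌋−j+1}^∞ c̃_k |^q < ∞. -/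
open Filter Topology Real

/-!
Put `γ = 1/α - H > 0` and `s = q γ ∈ (0, 1)`. Since `c k ∼ c₀ k^(-γ-1)`, there is `K` with
`|c k| ≤ K k^(-γ-1)` for `k ≥ 1`, and comparison with the telescoping series of
`n^(-γ) - (n+1)^(-γ)` (`rpow_tail_step`) gives `|∑_{k ≥ m} c k| ≤ A m^(-γ)` for `m ≥ 1`
(`abs_tail_le`). For `m ≤ 0` the tail of the extended sequence is the full sum, hence zero
(`tail_eq_zero`). So only the indices `m = ⌊cx⌋ - j + 1` with `1 ≤ m ≤ L`, where
`L = ⌊cx⌋ + ⌊cT⌋ + 1 ≤ c (x + T + 1)`, contribute, and the sum is at most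
`c^s A^q ∑_{m ≤ L} m^(-s) ≤ c^s A^q L^(1-s) / (1-s)` (`sum_rpow_neg_le`), which is `O(c)`
because `s < 1`.
-/

/-- Discrete substitute for `∫_0^L t^(-s) dt = L^(1-s) / (1-s)`, proved by telescoping with the
concave Bernoulli inequality. -/
lemma sum_rpow_neg_le (s : ℝ) (hs0 : 0 < s) (hs1 : s < 1) (L : ℕ) :
    ∑ n ∈ Finset.range L, ((n : ℝ) + 1) ^ (-s) ≤ (L : ℝ) ^ (1 - s) / (1 - s) := by
  induction L with
  | zero =>
    have h : (0 : ℝ) < 1 - s := by linarith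
    simp [Real.zero_rpow h.ne']
  | succ n ih =>
    rw [Finset.sum_range_succ]
    have h1s : (0 : ℝ) < 1 - s := by linarith
    have hn : (0 : ℝ) < (n : ℝ) + 1 := by positivity
    have hinv : 1 / ((n : ℝ) + 1) ≤ 1 := by
      rw [div_le_one hn]; linarith [(Nat.cast_nonneg n : (0 : ℝ) ≤ n)]
    have hb := rpow_one_add_le_one_add_mul_self (s := -(1 / ((n : ℝ) + 1))) (by linarith)
      (p := 1 - s) h1s.le (by linarith)
    have hfac : (n : ℝ) = ((n : ℝ) + 1) * (1 + -(1 / ((n : ℝ) + 1))) := by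
      field_simp; ring
    have e1 : (n : ℝ) ^ (1 - s)
        = ((n : ℝ) + 1) ^ (1 - s) * (1 + -(1 / ((n : ℝ) + 1))) ^ (1 - s) := by
      rw [← Real.mul_rpow hn.le (by linarith), ← hfac]
    have e2 : ((n : ℝ) + 1) ^ (1 - s) = ((n : ℝ) + 1) ^ (-s) * ((n : ℝ) + 1) := by
      rw [← Real.rpow_add_one hn.ne']; congr 1; ring
    have key : (n : ℝ) ^ (1 - s)
        ≤ ((n : ℝ) + 1) ^ (1 - s) - (1 - s) * ((n : ℝ) + 1) ^ (-s) := by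
      rw [e1]
      refine (mul_le_mul_of_nonneg_left hb (by positivity)).trans (le_of_eq ?_)
      rw [e2]; field_simp; ring
    push_cast
    rw [le_div_iff₀ h1s] at ih ⊢
    nlinarith

/-- Discrete form of the fact that `-t^(-γ) / γ` is a primitive of `t^(-γ-1)`. The factor `2^(γ+1)` pays for replacing
`n^(-γ-1)` by `(n+1)^(-γ-1)`. -/
lemma rpow_tail_step (γ : ℝ) (hγ : 0 < γ) (n : ℝ) (hn : 1 ≤ n) :
    n ^ (-γ - 1) ≤ 2 ^ (γ + 1) / γ * (n ^ (-γ) - (n + 1) ^ (-γ)) := by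
  have hn1 : 0 < n + 1 := by linarith
  have hn0 : 0 < n := by linarith
  have hinv : 1 / (n + 1) < 1 := by rw [div_lt_one hn1]; linarith
  -- The Bernoulli inequality for a negative exponent, from `1 + t ≤ exp t` and `log y ≤ y - 1`.
  have hb : 1 + -γ * -(1 / (n + 1)) ≤ (1 + -(1 / (n + 1))) ^ (-γ) := by
    have hy : 0 < 1 + -(1 / (n + 1)) := by linarith
    have hlog := Real.log_le_sub_one_of_pos hy
    have hexp := Real.add_one_le_exp (Real.log (1 + -(1 / (n + 1))) * -γ)
    rw [Real.rpow_def_of_pos hy]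
    nlinarith
  have hfac : n = (n + 1) * (1 + -(1 / (n + 1))) := by field_simp; ring
  have e1 : n ^ (-γ) = (n + 1) ^ (-γ) * (1 + -(1 / (n + 1))) ^ (-γ) := by
    rw [← Real.mul_rpow hn1.le (by linarith), ← hfac]
  have e2 : (n + 1) ^ (-γ) = (n + 1) ^ (-γ - 1) * (n + 1) := by
    rw [← Real.rpow_add_one hn1.ne']; congr 1; ring
  have key : γ * (n + 1) ^ (-γ - 1) ≤ n ^ (-γ) - (n + 1) ^ (-γ) := by
    have := mul_le_mul_of_nonneg_left hb (Real.rpow_nonneg hn1.le (-γ))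
    rw [← e1] at this
    have e3 : (n + 1) ^ (-γ) * (1 + -γ * -(1 / (n + 1)))
        = (n + 1) ^ (-γ) + γ * (n + 1) ^ (-γ - 1) := by
      rw [e2]; field_simp
    linarith
  have h2 : n ^ (-γ - 1) ≤ 2 ^ (γ + 1) * (n + 1) ^ (-γ - 1) := by
    have h3 : (2 * n) ^ (-γ - 1) ≤ (n + 1) ^ (-γ - 1) :=
      Real.rpow_le_rpow_of_nonpos hn1 (by linarith) (by linarith)
    rw [Real.mul_rpow (by norm_num) hn0.le] at h3
    have h4 : (2 : ℝ) ^ (γ + 1) * 2 ^ (-γ - 1) = 1 := by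
      rw [← Real.rpow_add (by norm_num)]; simp
    calc n ^ (-γ - 1) = 2 ^ (γ + 1) * (2 ^ (-γ - 1) * n ^ (-γ - 1)) := by
          rw [← mul_assoc, h4, one_mul]
      _ ≤ _ := mul_le_mul_of_nonneg_left h3 (by positivity)
  calc n ^ (-γ - 1) ≤ 2 ^ (γ + 1) * (n + 1) ^ (-γ - 1) := h2
    _ = 2 ^ (γ + 1) / γ * (γ * (n + 1) ^ (-γ - 1)) := by field_simp
    _ ≤ _ := mul_le_mul_of_nonneg_left key (by positivity)

lemma abs_tail_le (γ K : ℝ) (hγ : 0 < γ) (hK : 0 ≤ K) (c : ℕ → ℝ)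
    (hc : ∀ k : ℕ, 1 ≤ k → |c k| ≤ K * (k : ℝ) ^ (-γ - 1)) (m : ℕ) (hm : 1 ≤ m) :
    |∑' k : ℕ, c (m + k)| ≤ K * (2 ^ (γ + 1) / γ) * (m : ℝ) ^ (-γ) := by
  set f : ℕ → ℝ := fun k => ((m + k : ℕ) : ℝ) ^ (-γ) with hf
  have hle : ∀ k : ℕ, ((m + k : ℕ) : ℝ) ^ (-γ - 1) ≤ 2 ^ (γ + 1) / γ * (f k - f (k + 1)) := by
    intro k
    have := rpow_tail_step γ hγ ((m + k : ℕ) : ℝ) (by exact_mod_cast (by omega : 1 ≤ m + k))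
    simpa [hf, add_assoc] using this
  have hnn : ∀ k, 0 ≤ f k - f (k + 1) := by
    intro k
    have hpos : (0 : ℝ) < 2 ^ (γ + 1) / γ := by positivity
    have : 0 ≤ ((m + k : ℕ) : ℝ) ^ (-γ - 1) := by positivity
    exact nonneg_of_mul_nonneg_right (this.trans (hle k)) hpos
  have hlim : Tendsto f atTop (𝓝 0) := by
    refine (tendsto_rpow_neg_atTop hγ).comp (tendsto_natCast_atTop_atTop.comp ?_)
    exact tendsto_atTop_mono (fun k => Nat.le_add_left k m) tendsto_id
  have hsum : HasSum (fun k => f k - f (k + 1)) (f 0) := by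
    rw [hasSum_iff_tendsto_nat_of_nonneg hnn]
    simp only [Finset.sum_range_sub']
    simpa using hlim.const_sub (f 0)
  have := tsum_of_norm_bounded (hsum.mul_left (K * (2 ^ (γ + 1) / γ))) (f := fun k => c (m + k))
    (fun k => by
      rw [Real.norm_eq_abs]
      refine (hc _ (by omega)).trans ?_
      rw [mul_assoc]
      exact mul_le_mul_of_nonneg_left (hle k) hK)
  simpa [hf] using this

/-- No summability is needed: if the family is not summable, its `tsum` is zero by convention. -/
lemma tail_eq_zero (c : ℕ → ℝ) (ct : ℤ → ℝ) (hsum0 : ∑' k : ℕ, c k = 0)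
    (hct : ∀ k : ℤ, ct k = if 0 ≤ k then c k.toNat else 0) (m : ℤ) (hm : m ≤ 0) :
    ∑' k : ℕ, ct (m + (k : ℤ)) = 0 := by
  by_cases hs : Summable (fun k : ℕ => ct (m + (k : ℤ)))
  · rw [← hs.sum_add_tsum_nat_add (-m).toNat]
    have h1 : ∑ k ∈ Finset.range (-m).toNat, ct (m + (k : ℤ)) = 0 := by
      refine Finset.sum_eq_zero fun k hk => ?_
      rw [Finset.mem_range] at hk
      rw [hct, if_neg (by omega)]
    have h2 : ∀ k : ℕ, ct (m + ((k + (-m).toNat : ℕ) : ℤ)) = c k := by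
      intro k
      have : m + ((k + (-m).toNat : ℕ) : ℤ) = k := by omega
      rw [this, hct]; simp
    simp only [h1, h2, hsum0, add_zero]
  · exact tsum_eq_zero_of_not_summable hs

/-- Condition (A2)′: the uniform moment bound
`sup_{c ≥ 1} (1/c) ∑_{j=−⌊cT⌋}^{⌊cT⌋} |c^(1/α−H) ∑_{k=⌊cx⌋−j+1}^∞ c̃_k|^q < ∞`,
for `q(H − 1/α) > −1`, where `c̃_k = c_k` for `k ≥ 0` and `c̃_k = 0` for `k < 0`,
`c_k ∼ c₀ k^(H−1/α−1)` and `∑_k c_k = 0`. -/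
theorem uniform_moment_bound (α H c₀ : ℝ) (c : ℕ → ℝ) (ct : ℤ → ℝ)
    (hα0 : 0 < α) (hα2 : α ≤ 2) (hH0 : 0 < H) (hH : H < 1 / α) (hc₀ : 0 < c₀)
    (hsim : Tendsto (fun k : ℕ => c k / (c₀ * (k : ℝ) ^ (H - 1 / α - 1))) atTop (𝓝 1))
    (hsum0 : ∑' k : ℕ, c k = 0)
    (hct : ∀ k : ℤ, ct k = if 0 ≤ k then c k.toNat else 0)
    (x T q : ℝ) (hx : 0 ≤ x) (hT : 0 < T) (hq : 0 < q) (hq' : -1 < q * (H - 1 / α)) :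
    ∃ B : ℝ, ∀ cc : ℝ, 1 ≤ cc →
      (1 / cc) * ∑ j ∈ Finset.Icc (-⌊cc * T⌋) ⌊cc * T⌋,
          |cc ^ (1 / α - H) * ∑' k : ℕ, ct (⌊cc * x⌋ - j + 1 + (k : ℤ))| ^ q ≤ B := by
  obtain ⟨γ, hγdef⟩ : ∃ γ, γ = 1 / α - H := ⟨_, rfl⟩
  have hγ : 0 < γ := by linarith
  rw [show H - 1 / α - 1 = -γ - 1 by linarith] at hsim
  rw [show H - 1 / α = -γ by linarith] at hq'
  rw [← hγdef]
  obtain ⟨s, hs⟩ : ∃ s, s = γ * q := ⟨_, rfl⟩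
  have hs0 : 0 < s := by rw [hs]; positivity
  have hs1 : s < 1 := by rw [hs]; nlinarith
  -- A convergent sequence is bounded, so the comparison holds for every `k ≥ 1`.
  obtain ⟨K, hK, hcK⟩ : ∃ K : ℝ, 0 ≤ K ∧ ∀ k : ℕ, 1 ≤ k → |c k| ≤ K * (k : ℝ) ^ (-γ - 1) := by
    obtain ⟨R, hR⟩ := (Metric.isBounded_range_of_tendsto _ hsim).exists_norm_le
    have hR' : ∀ k : ℕ, |c k / (c₀ * (k : ℝ) ^ (-γ - 1))| ≤ R := fun k => hR _ ⟨k, rfl⟩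
    have hR0 : 0 ≤ R := (abs_nonneg _).trans (hR' 0)
    refine ⟨R * c₀, by positivity, fun k hk => ?_⟩
    have hk0 : (0 : ℝ) < k := by exact_mod_cast hk
    have hp : 0 < c₀ * (k : ℝ) ^ (-γ - 1) := by positivity
    have := hR' k
    rw [abs_div, abs_of_pos hp, div_le_iff₀ hp] at this
    linarith
  obtain ⟨A, hA⟩ : ∃ A, A = K * (2 ^ (γ + 1) / γ) := ⟨_, rfl⟩
  have hA0 : 0 ≤ A := by rw [hA]; positivity
  have htail : ∀ n : ℕ, |∑' k : ℕ, ct ((n : ℤ) + 1 + (k : ℤ))| ≤ A * ((n : ℝ) + 1) ^ (-γ) := by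
    intro n
    have h := abs_tail_le γ K hγ hK c hcK (n + 1) (by omega)
    rw [← hA] at h
    have e : ∀ k : ℕ, ct ((n : ℤ) + 1 + (k : ℤ)) = c (n + 1 + k) := by
      intro k
      rw [hct, if_pos (by omega)]
      congr 1
    simp only [e]
    exact_mod_cast h
  refine ⟨A ^ q * ((x + T + 1) ^ (1 - s) / (1 - s)), fun cc hcc => ?_⟩
  have hcc0 : 0 < cc := by linarith
  obtain ⟨N, hN⟩ : ∃ N, N = ⌊cc * x⌋ := ⟨_, rfl⟩
  obtain ⟨M, hM⟩ : ∃ M, M = ⌊cc * T⌋ := ⟨_, rfl⟩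
  rw [← hN, ← hM]
  have hN0 : 0 ≤ N := by rw [hN]; exact Int.floor_nonneg.2 (by positivity)
  have hM0 : 0 ≤ M := by rw [hM]; exact Int.floor_nonneg.2 (by positivity)
  obtain ⟨L, hL⟩ : ∃ L : ℕ, (L : ℤ) = N + M + 1 := ⟨(N + M + 1).toNat, by omega⟩
  have hLle : (L : ℝ) ≤ cc * (x + T + 1) := by
    have h1 : (N : ℝ) ≤ cc * x := by rw [hN]; exact Int.floor_le _
    have h2 : (M : ℝ) ≤ cc * T := by rw [hM]; exact Int.floor_le _
    have h3 : (L : ℝ) = N + M + 1 := by exact_mod_cast hL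
    nlinarith
  set G : ℤ → ℝ := fun m => |cc ^ γ * ∑' k : ℕ, ct (m + 1 + (k : ℤ))| ^ q with hG
  have hG0 : ∀ m, 0 ≤ G m := fun m => Real.rpow_nonneg (abs_nonneg _) _
  have hGneg : ∀ m, m < 0 → G m = 0 := by
    intro m hm
    simp only [hG]
    rw [tail_eq_zero c ct hsum0 hct (m + 1) (by omega)]
    simp [Real.zero_rpow hq.ne']
  have hGpos : ∀ n : ℕ, G n ≤ cc ^ s * A ^ q * ((n : ℝ) + 1) ^ (-s) := by
    intro n
    have hn : (0 : ℝ) ≤ (n : ℝ) + 1 := by positivity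
    have h : |cc ^ γ * ∑' k : ℕ, ct ((n : ℤ) + 1 + (k : ℤ))|
        ≤ cc ^ γ * (A * ((n : ℝ) + 1) ^ (-γ)) := by
      rw [abs_mul, abs_of_nonneg (by positivity)]
      exact mul_le_mul_of_nonneg_left (htail n) (by positivity)
    refine (Real.rpow_le_rpow (abs_nonneg _) h hq.le).trans (le_of_eq ?_)
    rw [Real.mul_rpow (by positivity) (by positivity), Real.mul_rpow hA0 (by positivity),
      ← Real.rpow_mul hcc0.le, ← Real.rpow_mul hn, hs, neg_mul, mul_assoc]
  -- Reindex by `n = N - j`; the indices with `j > N` contribute nothing.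
  have hsumle : ∑ j ∈ Finset.Icc (-M) M, G (N - j) ≤ ∑ n ∈ Finset.range L, G n := by
    have hinj : Set.InjOn (fun n : ℕ => N - (n : ℤ)) (Finset.range L) := by
      intro a _ b _ hab
      simp only at hab
      omega
    have e : ∑ n ∈ Finset.range L, G n
        = ∑ j ∈ (Finset.range L).image (fun n : ℕ => N - (n : ℤ)), G (N - j) := by
      rw [Finset.sum_image hinj]
      simp
    rw [e, ← Finset.sum_filter_of_ne (p := fun j => j ≤ N)]
    · refine Finset.sum_le_sum_of_subset_of_nonneg ?_ fun _ _ _ => hG0 _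
      intro j hj
      simp only [Finset.mem_filter, Finset.mem_Icc] at hj
      simp only [Finset.mem_image, Finset.mem_range]
      exact ⟨(N - j).toNat, by omega, by omega⟩
    · intro j _ hj
      by_contra hlt
      exact hj (hGneg _ (by omega))
  have h1s : 0 < 1 - s := by linarith
  have hbound : ∑ n ∈ Finset.range L, G n
      ≤ cc ^ s * A ^ q * ((cc * (x + T + 1)) ^ (1 - s) / (1 - s)) := by
    refine (Finset.sum_le_sum fun n _ => hGpos n).trans ?_
    rw [← Finset.mul_sum]
    refine mul_le_mul_of_nonneg_left ((sum_rpow_neg_le s hs0 hs1 L).trans ?_) (by positivity)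
    gcongr
  have hpow : cc ^ s * cc ^ (1 - s) = cc := by
    rw [← Real.rpow_add hcc0]; simp
  calc (1 / cc) * ∑ j ∈ Finset.Icc (-M) M, G (N - j)
      ≤ (1 / cc) * (cc ^ s * A ^ q * ((cc * (x + T + 1)) ^ (1 - s) / (1 - s))) :=
        mul_le_mul_of_nonneg_left (hsumle.trans hbound) (by positivity)
    _ = (1 / cc) * (cc ^ s * cc ^ (1 - s)) * (A ^ q * ((x + T + 1) ^ (1 - s) / (1 - s))) := by
        rw [Real.mul_rpow hcc0.le (by positivity)]; ring
    _ = A ^ q * ((x + T + 1) ^ (1 - s) / (1 - s)) := by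
        rw [hpow, one_div_mul_cancel hcc0.ne', one_mul]
end
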